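/- arXiv:1904.09928 — 5 statements merged into one kernel-verified Lean document; each statement's English description precedes it below -/
import Mathlib

section
/- Let Φ₁ and Φ₂ be N-functions. Then for every constant C > 0 there exists a smooth compactly supported function f : ℝ → ℝ such that for every z ∈ ℝ one has ‖f − z‖_{(Φ₁)} > C · ‖f'‖_{(Φ₂)}, where norms are Luxemburg norms with respect to Lebesgue measure on ℝ. In other words, there is no constant C for which the Poincaré–Sobolev–Orlicz inequality inf_{z∈ℝ} ‖f − z‖_{(Φ₁)} ≤ C ‖f'‖_{(Φ₂)} holds for all such f. (Consequently the first L_{Φ₁,Φ₂}-torsion of ℝ is nonzero and H¹_{Φ₁,Φ₂}(ℝ) is not separated.) -/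
open MeasureTheory ENNReal

/-- An N-function: even, convex, vanishing exactly at `0`, with `Φ(x)/x → 0` as `x → 0⁺`
and `Φ(x)/x → ∞` as `x → ∞`. -/
structure IsNFunction (Φ : ℝ → ℝ) : Prop where
  nonneg : ∀ x, 0 ≤ Φ x
  even : ∀ x, Φ (-x) = Φ x
  convex : ConvexOn ℝ Set.univ Φ
  zero_iff : ∀ x, Φ x = 0 ↔ x = 0
  tendsto_zero : Filter.Tendsto (fun x => Φ x / x) (nhdsWithin 0 (Set.Ioi 0)) (nhds 0)
  tendsto_atTop : Filter.Tendsto (fun x => Φ x / x) Filter.atTop Filter.atTop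

/-- The Luxemburg (gauge) norm `‖f‖_{(Φ)} = inf {K > 0 : ∫ Φ(f/K) dμ ≤ 1}`, with value `∞`
when no such `K` exists. -/
noncomputable def luxNorm {α : Type*} [MeasurableSpace α] (μ : Measure α)
    (Φ : ℝ → ℝ) (f : α → ℝ) : ℝ≥0∞ :=
  sInf {K : ℝ≥0∞ | ∃ k : ℝ, 0 < k ∧ K = ENNReal.ofReal k ∧
    ∫⁻ x, ENNReal.ofReal (Φ (f x / k)) ∂μ ≤ 1}

theorem nfun_mono {Φ : ℝ → ℝ} (h : IsNFunction Φ) {a b : ℝ} (hab : |a| ≤ b) : Φ a ≤ Φ b := by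
  have := h.convex.le_max_of_mem_Icc (x := -b) (y := b) (z := a) trivial trivial (abs_le.mp hab)
  rwa [h.even, max_self] at this

theorem no_poincare_aux
    {Φ₁ Φ₂ : ℝ → ℝ} (h1 : IsNFunction Φ₁) (h2 : IsNFunction Φ₂) :
    ∀ C : ℝ, 0 < C → ∃ f : ℝ → ℝ, ContDiff ℝ (⊤ : ℕ∞) f ∧ HasCompactSupport f ∧
      ∀ z : ℝ, ENNReal.ofReal C * luxNorm volume Φ₂ (deriv f) <
        luxNorm volume Φ₁ (fun x => f x - z) := by
  intro C hC
  let φ : ContDiffBump (0 : ℝ) := ⟨1, 2, one_pos, one_lt_two⟩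
  have hφs : ContDiff ℝ (⊤ : ℕ∞) (φ : ℝ → ℝ) := φ.contDiff
  have hφc : HasCompactSupport (φ : ℝ → ℝ) := φ.hasCompactSupport
  obtain ⟨M₀, hM₀⟩ := hφc.deriv.exists_bound_of_continuous
    (hφs.continuous_deriv (by simp))
  let M : ℝ := max M₀ 1
  have hM0 : 0 < M := lt_of_lt_of_le one_pos (le_max_right _ _)
  have hM : ∀ x, |deriv (φ : ℝ → ℝ) x| ≤ M := fun x => (hM₀ x).trans (le_max_left _ _)
  let ε : ℝ := 1 / (2 * C)
  have hε : 0 < ε := by positivity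
  have hP1 : 0 < Φ₁ 1 := lt_of_le_of_ne (h1.nonneg 1)
    (fun h => one_ne_zero ((h1.zero_iff 1).mp h.symm))
  -- choose the scale
  have ht : Filter.Tendsto (fun R : ℝ => M / ε * R⁻¹) Filter.atTop (nhdsWithin 0 (Set.Ioi 0)) := by
    rw [tendsto_nhdsWithin_iff]
    constructor
    · simpa using tendsto_inv_atTop_zero.const_mul (M / ε)
    · filter_upwards [Filter.eventually_gt_atTop 0] with R hR
      exact Set.mem_Ioi.mpr (by positivity)
  have hsmall := (h2.tendsto_zero.comp ht).eventually
    (gt_mem_nhds (show (0 : ℝ) < 1 / (4 * (M / ε)) by positivity))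
  obtain ⟨R, hR2, hR0, hR1⟩ := (hsmall.and ((Filter.eventually_gt_atTop 0).and
    (Filter.eventually_gt_atTop (1 / (2 * Φ₁ 1))))).exists
  have hRb : 4 * R * Φ₂ (M / ε * R⁻¹) ≤ 1 := by
    simp only [Function.comp] at hR2
    rw [div_lt_div_iff₀ (by positivity) (by positivity)] at hR2
    have : Φ₂ (M / ε * R⁻¹) * (4 * (M / ε)) * R < 1 * (M / ε * R⁻¹) * R :=
      mul_lt_mul_of_pos_right hR2 hR0
    have e : 1 * (M / ε * R⁻¹) * R = M / ε := by field_simp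
    rw [e] at this
    have hq : 0 < M / ε := by positivity
    by_contra hcon
    push Not at hcon
    nlinarith
  have hRc : 1 < 2 * R * Φ₁ 1 := by
    rw [div_lt_iff₀ (by positivity)] at hR1
    linarith
  let f : ℝ → ℝ := fun x => φ (R⁻¹ * x)
  have hRi : R⁻¹ ≠ 0 := inv_ne_zero hR0.ne'
  have hderiv : ∀ x, deriv f x = R⁻¹ * deriv (φ : ℝ → ℝ) (R⁻¹ * x) := by
    intro x
    have := deriv_comp_mul_left R⁻¹ (φ : ℝ → ℝ) x
    simpa [f] using this
  have hout : ∀ x : ℝ, x ∉ Set.Icc (-(2 * R)) (2 * R) → R⁻¹ * x ∉ tsupport (φ : ℝ → ℝ) := by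
    intro x hx hmem
    rw [φ.tsupport_eq, Metric.mem_closedBall, dist_zero_right, Real.norm_eq_abs, abs_mul,
      abs_of_pos (inv_pos.mpr hR0), inv_mul_le_iff₀ hR0] at hmem
    have h2' : |x| ≤ R * 2 := hmem
    apply hx
    rw [Set.mem_Icc, ← abs_le]
    linarith
  have hfout : ∀ x : ℝ, x ∉ Set.Icc (-(2 * R)) (2 * R) → f x = 0 :=
    fun x hx => image_eq_zero_of_notMem_tsupport (f := (φ : ℝ → ℝ)) (hout x hx)
  have hdout : ∀ x : ℝ, x ∉ Set.Icc (-(2 * R)) (2 * R) → deriv f x = 0 := by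
    intro x hx
    rw [hderiv]
    have : deriv (φ : ℝ → ℝ) (R⁻¹ * x) = 0 := by
      by_contra hne
      exact hout x hx (support_deriv_subset hne)
    rw [this, mul_zero]
  have hfin : ∀ x ∈ Set.Icc (-R) R, f x = 1 := by
    intro x hx
    apply φ.one_of_mem_closedBall
    rw [Metric.mem_closedBall, dist_zero_right, Real.norm_eq_abs, abs_mul,
      abs_of_pos (inv_pos.mpr hR0), inv_mul_le_iff₀ hR0]
    change |x| ≤ R * 1
    rw [mul_one]
    exact abs_le.mpr hx
  have hup : luxNorm volume Φ₂ (deriv f) ≤ ENNReal.ofReal ε := by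
    apply sInf_le
    refine ⟨ε, hε, rfl, ?_⟩
    calc ∫⁻ x, ENNReal.ofReal (Φ₂ (deriv f x / ε))
        ≤ ∫⁻ x, (Set.Icc (-(2 * R)) (2 * R)).indicator
            (fun _ => ENNReal.ofReal (Φ₂ (M / ε * R⁻¹))) x := by
          apply lintegral_mono
          intro x
          by_cases hx : x ∈ Set.Icc (-(2 * R)) (2 * R)
          · simp only [Set.indicator_of_mem hx]
            apply ENNReal.ofReal_le_ofReal
            apply nfun_mono h2
            rw [hderiv, abs_div, abs_mul, abs_of_pos hε, abs_of_pos (inv_pos.mpr hR0)]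
            calc R⁻¹ * |deriv (φ : ℝ → ℝ) (R⁻¹ * x)| / ε ≤ R⁻¹ * M / ε := by
                  gcongr
                  exact hM _
              _ = M / ε * R⁻¹ := by ring
          · simp only [Set.indicator_of_notMem hx, hdout x hx, zero_div, (h2.zero_iff 0).mpr rfl,
              ENNReal.ofReal_zero, le_refl]
      _ = ENNReal.ofReal (Φ₂ (M / ε * R⁻¹)) * ENNReal.ofReal (2 * R - -(2 * R)) := by
          rw [lintegral_indicator_const measurableSet_Icc, Real.volume_Icc]
      _ ≤ 1 := by
          rw [← ENNReal.ofReal_mul (h2.nonneg _), ENNReal.ofReal_le_one]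
          linarith
  refine ⟨f, hφs.comp (contDiff_const.mul contDiff_id), ?_, ?_⟩
  · exact HasCompactSupport.intro isCompact_Icc hfout
  intro z
  have hlt : ENNReal.ofReal C * luxNorm volume Φ₂ (deriv f) < 1 := by
    calc ENNReal.ofReal C * luxNorm volume Φ₂ (deriv f)
        ≤ ENNReal.ofReal C * ENNReal.ofReal ε := by gcongr
      _ = ENNReal.ofReal (C * ε) := (ENNReal.ofReal_mul hC.le).symm
      _ < 1 := by
        rw [ENNReal.ofReal_lt_one]
        have : C * ε = 1 / 2 := by simp only [ε]; field_simp
        rw [this]; norm_num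
  refine lt_of_lt_of_le hlt ?_
  apply le_sInf
  rintro K ⟨k, hk, rfl, hint⟩
  by_cases hz : z = 0
  · rw [ENNReal.one_le_ofReal]
    by_contra hk1
    push Not at hk1
    apply absurd hint
    rw [not_le]
    calc (1 : ℝ≥0∞) < ENNReal.ofReal (Φ₁ 1 * (R - -R)) := by
          rw [ENNReal.one_lt_ofReal]; linarith
      _ = ∫⁻ x, (Set.Icc (-R) R).indicator (fun _ => ENNReal.ofReal (Φ₁ 1)) x := by
          rw [lintegral_indicator_const measurableSet_Icc, Real.volume_Icc,
            ENNReal.ofReal_mul hP1.le]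
      _ ≤ _ := by
          apply lintegral_mono
          intro x
          by_cases hx : x ∈ Set.Icc (-R) R
          · simp only [Set.indicator_of_mem hx, hfin x hx, hz, sub_zero]
            apply ENNReal.ofReal_le_ofReal
            apply nfun_mono h1
            rw [abs_one, le_div_iff₀ hk]
            linarith
          · simp only [Set.indicator_of_notMem hx, zero_le]
  · exfalso
    have hp : 0 < Φ₁ (-z / k) := lt_of_le_of_ne (h1.nonneg _)
      (fun h => (div_ne_zero (neg_ne_zero.mpr hz) hk.ne') ((h1.zero_iff _).mp h.symm))
    apply absurd hint
    rw [not_le]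
    calc (1 : ℝ≥0∞) < ⊤ := ENNReal.one_lt_top
      _ = ∫⁻ x, (Set.Ioi (2 * R)).indicator (fun _ => ENNReal.ofReal (Φ₁ (-z / k))) x := by
          rw [lintegral_indicator_const measurableSet_Ioi, Real.volume_Ioi, ENNReal.mul_top]
          simpa using hp
      _ ≤ _ := by
          apply lintegral_mono
          intro x
          by_cases hx : x ∈ Set.Ioi (2 * R)
          · have : f x = 0 := hfout x (fun h => absurd h.2 (not_le.mpr hx))
            simp only [Set.indicator_of_mem hx, this, zero_sub, le_refl]
          · simp only [Set.indicator_of_notMem hx, zero_le]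

/-- The Poincaré–Sobolev–Orlicz inequality fails on `ℝ`: for any N-functions `Φ₁, Φ₂` and
any constant `C > 0` there is a smooth compactly supported `f : ℝ → ℝ` such that
`‖f - z‖_{(Φ₁)} > C ‖f'‖_{(Φ₂)}` for every `z ∈ ℝ`. -/
theorem no_poincare_sobolev_orlicz_on_real_line
    {Φ₁ Φ₂ : ℝ → ℝ} (h1 : IsNFunction Φ₁) (h2 : IsNFunction Φ₂) :
    ∀ C : ℝ, 0 < C → ∃ f : ℝ → ℝ, ContDiff ℝ (⊤ : ℕ∞) f ∧ HasCompactSupport f ∧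
      ∀ z : ℝ, ENNReal.ofReal C * luxNorm volume Φ₂ (deriv f) <
        luxNorm volume Φ₁ (fun x => f x - z) := by
  exact no_poincare_aux h1 h2
end

section
/- Let Φ₁ and Φ₂ be N-functions. Then for every constant C > 0 there exists a smooth function f : ℝ → ℝ whose support is a compact subset of (0, ∞) such that for every z ∈ ℝ one has ‖f − z‖_{(Φ₁),(0,∞)} > C · ‖f'‖_{(Φ₂),(0,∞)}, where the Luxemburg norms are taken with respect to Lebesgue measure on the half-line (0, ∞). (Thus the Poincaré–Sobolev–Orlicz inequality also fails on the half-line ℝ₊.) -/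
open MeasureTheory ENNReal

theorem IsNFunction.le_of_abs_le {Φ : ℝ → ℝ} (h : IsNFunction Φ) {x y : ℝ} (hxy : |x| ≤ y) :
    Φ x ≤ Φ y := by
  have h' := abs_le.1 hxy
  have := h.convex.le_max_of_mem_Icc (Set.mem_univ (-y)) (Set.mem_univ y) (z := x) ⟨h'.1, h'.2⟩
  rwa [h.even, max_self] at this

theorem IsNFunction.pos {Φ : ℝ → ℝ} (h : IsNFunction Φ) {x : ℝ} (hx : x ≠ 0) : 0 < Φ x :=
  lt_of_le_of_ne (h.nonneg x) (fun e => hx ((h.zero_iff x).1 e.symm))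

/-- The Poincaré–Sobolev–Orlicz inequality also fails on the half-line `(0, ∞)`: for any
N-functions `Φ₁, Φ₂` and any constant `C > 0` there is a smooth `f : ℝ → ℝ` whose support
is a compact subset of `(0, ∞)` such that `‖f - z‖_{(Φ₁),(0,∞)} > C ‖f'‖_{(Φ₂),(0,∞)}`
for every `z ∈ ℝ`. -/
theorem no_poincare_sobolev_orlicz_on_half_line
    {Φ₁ Φ₂ : ℝ → ℝ} (h1 : IsNFunction Φ₁) (h2 : IsNFunction Φ₂) :
    ∀ C : ℝ, 0 < C → ∃ f : ℝ → ℝ, ContDiff ℝ (⊤ : ℕ∞) f ∧ HasCompactSupport f ∧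
      tsupport f ⊆ Set.Ioi (0 : ℝ) ∧
      ∀ z : ℝ, ENNReal.ofReal C * luxNorm (volume.restrict (Set.Ioi 0)) Φ₂ (deriv f) <
        luxNorm (volume.restrict (Set.Ioi 0)) Φ₁ (fun x => f x - z) := by
  intro C hC
  let φ : ContDiffBump (3 : ℝ) := ⟨1, 2, by norm_num, by norm_num⟩
  have hφ : ContDiff ℝ (⊤ : ℕ∞) φ := φ.contDiff
  have hcs : HasCompactSupport (deriv φ) := φ.hasCompactSupport.deriv
  have hdc : Continuous (deriv φ) := hφ.continuous_deriv (by exact_mod_cast le_top)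
  obtain ⟨M0, hM0⟩ := hcs.exists_bound_of_continuous hdc
  obtain ⟨M, hMpos, hM⟩ : ∃ M : ℝ, 0 < M ∧ ∀ x, |deriv φ x| ≤ M :=
    ⟨max M0 1, by positivity, fun x => (hM0 x).trans (le_max_left _ _)⟩
  have hP : 0 < Φ₁ (1 / (C + 1)) := h1.pos (by positivity)
  -- choose the scale
  have hmap : Filter.Tendsto (fun r : ℝ => M * r) (nhdsWithin 0 (Set.Ioi 0))
      (nhdsWithin 0 (Set.Ioi 0)) := by
    apply tendsto_nhdsWithin_of_tendsto_nhds_of_eventually_within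
    · have : Filter.Tendsto (fun r : ℝ => M * r) (nhds 0) (nhds (M * 0)) :=
        (continuous_const.mul continuous_id).tendsto 0
      rw [mul_zero] at this
      exact this.mono_left nhdsWithin_le_nhds
    · filter_upwards [self_mem_nhdsWithin] with r hr
      exact mul_pos hMpos hr
  have e1 := (h2.tendsto_zero.comp hmap).eventually (gt_mem_nhds (show 0 < 1 / (4 * M) by positivity))
  have e2 : ∀ᶠ r : ℝ in nhdsWithin 0 (Set.Ioi 0), r < 2 * Φ₁ (1 / (C + 1)) :=
    nhdsWithin_le_nhds (gt_mem_nhds (by positivity))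
  have e3 : ∀ᶠ r : ℝ in nhdsWithin 0 (Set.Ioi 0), 0 < r := self_mem_nhdsWithin
  obtain ⟨r, hr1, hr2, hr⟩ := (e1.and (e2.and e3)).exists
  have hr1' : 4 / r * Φ₂ (M * r) ≤ 1 := by
    simp only [Function.comp] at hr1
    rw [div_lt_div_iff₀ (by positivity) (by positivity)] at hr1
    rw [div_mul_eq_mul_div, div_le_one hr]
    nlinarith
  let f : ℝ → ℝ := fun x => φ (r * x)
  have hsupp : Function.support f ⊆ Set.Icc (1 / r) (5 / r) := by
    intro x hx
    have : r * x ∈ Function.support φ := hx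
    rw [φ.support_eq, Metric.mem_ball, Real.dist_eq, abs_lt] at this
    obtain ⟨ha, hb⟩ := this
    change -2 < _ at ha
    change _ < (2 : ℝ) at hb
    rw [Set.mem_Icc, div_le_iff₀ hr, le_div_iff₀ hr]
    constructor <;> linarith
  have htsupp : tsupport f ⊆ Set.Icc (1 / r) (5 / r) := closure_minimal hsupp isClosed_Icc
  have hone : ∀ x ∈ Set.Icc (2 / r) (4 / r), f x = 1 := by
    intro x hx
    rw [Set.mem_Icc, div_le_iff₀ hr, le_div_iff₀ hr] at hx
    apply φ.one_of_mem_closedBall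
    rw [Metric.mem_closedBall, Real.dist_eq, abs_le]
    change -(1 : ℝ) ≤ _ ∧ _ ≤ (1 : ℝ)
    constructor <;> linarith [hx.1, hx.2]
  have hderiv : ∀ x, |deriv f x| ≤ M * r := by
    intro x
    have : deriv f x = r * deriv φ (r * x) := by
      have := deriv_comp_mul_left r φ x
      simpa using this
    rw [this, abs_mul, abs_of_pos hr, mul_comm]
    exact mul_le_mul_of_nonneg_right (hM _) hr.le
  have hup : luxNorm (volume.restrict (Set.Ioi 0)) Φ₂ (deriv f) ≤ 1 := by
    apply sInf_le
    refine ⟨1, one_pos, by simp, ?_⟩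
    calc ∫⁻ x in Set.Ioi 0, ENNReal.ofReal (Φ₂ (deriv f x / 1))
        ≤ ∫⁻ x, ENNReal.ofReal (Φ₂ (deriv f x / 1)) := setLIntegral_le_lintegral _ _
      _ ≤ ∫⁻ x, (Set.Icc (1 / r) (5 / r)).indicator
            (fun _ => ENNReal.ofReal (Φ₂ (M * r))) x := by
          apply lintegral_mono
          intro x
          by_cases hx : x ∈ Set.Icc (1 / r) (5 / r)
          · simp only [Set.indicator_of_mem hx, div_one]
            exact ENNReal.ofReal_le_ofReal (h2.le_of_abs_le (hderiv x))
          · have h0 : deriv f x = 0 := by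
              by_contra hne
              exact hx (htsupp (support_deriv_subset hne))
            simp [h0, (h2.zero_iff 0).2 rfl]
      _ = ENNReal.ofReal (Φ₂ (M * r)) * volume (Set.Icc (1 / r) (5 / r)) :=
          lintegral_indicator_const measurableSet_Icc _
      _ ≤ 1 := by
          rw [Real.volume_Icc, ← ENNReal.ofReal_mul (h2.nonneg _)]
          apply ENNReal.ofReal_le_one.2
          calc _ = 4 / r * Φ₂ (M * r) := by ring
            _ ≤ 1 := hr1'
  have hup' : ENNReal.ofReal C * luxNorm (volume.restrict (Set.Ioi 0)) Φ₂ (deriv f)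
      ≤ ENNReal.ofReal C := by
    calc _ ≤ ENNReal.ofReal C * 1 := by gcongr
      _ = _ := mul_one _
  refine ⟨f, hφ.comp (contDiff_const.mul contDiff_id),
    isCompact_Icc.of_isClosed_subset (isClosed_tsupport f) htsupp,
    fun x hx => lt_of_lt_of_le (by positivity) (htsupp hx).1, fun z => ?_⟩
  have hlt : ENNReal.ofReal C < ENNReal.ofReal (C + 1) :=
    (ENNReal.ofReal_lt_ofReal_iff (by positivity)).2 (by linarith)
  refine (hup'.trans_lt hlt).trans_le ?_
  apply le_sInf
  rintro K ⟨k, hk, rfl, hint⟩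
  apply ENNReal.ofReal_le_ofReal
  by_contra! hlt'
  by_cases hz : z = 0
  · subst hz
    have : ENNReal.ofReal (Φ₁ (1 / (C + 1))) * volume (Set.Icc (2 / r) (4 / r)) ≤ 1 := by
      rw [← setLIntegral_const]
      refine le_trans ?_ hint
      calc _ ≤ ∫⁻ x in Set.Icc (2 / r) (4 / r), ENNReal.ofReal (Φ₁ ((f x - 0) / k)) := by
            apply setLIntegral_mono' measurableSet_Icc
            intro x hx
            rw [hone x hx, sub_zero]
            apply ENNReal.ofReal_le_ofReal (h1.le_of_abs_le _)
            rw [abs_of_pos (by positivity)]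
            exact one_div_le_one_div_of_le hk hlt'.le
        _ ≤ _ := lintegral_mono_set (fun x hx => lt_of_lt_of_le (by positivity) hx.1)
    rw [Real.volume_Icc, ← ENNReal.ofReal_mul (h1.nonneg _), ENNReal.ofReal_le_one] at this
    have e : Φ₁ (1 / (C + 1)) * (4 / r - 2 / r) = 2 * Φ₁ (1 / (C + 1)) / r := by ring
    rw [e, div_le_one hr] at this
    linarith
  · have hpos : 0 < Φ₁ (-z / k) := h1.pos (div_ne_zero (neg_ne_zero.2 hz) hk.ne')
    have : ENNReal.ofReal (Φ₁ (-z / k)) * volume (Set.Ioi (5 / r)) ≤ 1 := by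
      rw [← setLIntegral_const]
      refine le_trans ?_ hint
      calc _ ≤ ∫⁻ x in Set.Ioi (5 / r), ENNReal.ofReal (Φ₁ ((f x - z) / k)) := by
            apply setLIntegral_mono' measurableSet_Ioi
            intro x hx
            have h0 : f x = 0 := by
              by_contra hne
              exact absurd (hsupp hne).2 (not_le.2 hx)
            rw [h0, zero_sub]
        _ ≤ _ := lintegral_mono_set (Set.Ioi_subset_Ioi (by positivity))
    rw [Real.volume_Ioi, ENNReal.mul_top (by simpa using hpos)] at this
    simp at this
end

section
/- Let Φ be an N-function satisfying the Δ₂-condition (there exists K > 2 with Φ(2x) ≤ K·Φ(x) for all x ≥ 0), and let a : ℝ → ℝ be a measurable function with ∫_ℝ Φ(a(x)) dx < ∞. Then for every ε > 0 there exists an integrable function g : ℝ → ℝ with compact support such that ∫_ℝ g(x) dx = 0 and ‖g − a‖_{(Φ)} < ε, where ‖·‖_{(Φ)} is the Luxemburg norm with respect to Lebesgue measure. (Consequently, for any N-function Φ₁, the first reduced L_{Φ₁,Φ}-cohomology of ℝ vanishes: every 1-form a(x)dx in L^Φ(ℝ) is the limit in L^Φ of differentials of compactly supported functions.) -/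
open MeasureTheory ENNReal

theorem nf_zero {Φ : ℝ → ℝ} (hΦ : IsNFunction Φ) : Φ 0 = 0 := (hΦ.zero_iff 0).2 rfl

theorem nf_abs {Φ : ℝ → ℝ} (hΦ : IsNFunction Φ) (x : ℝ) : Φ |x| = Φ x := by
  rcases abs_choice x with h | h <;> rw [h]
  exact hΦ.even x

theorem nf_mono {Φ : ℝ → ℝ} (hΦ : IsNFunction Φ) {x y : ℝ} (hx : 0 ≤ x) (hxy : x ≤ y) :
    Φ x ≤ Φ y := by
  rcases hx.eq_or_lt with rfl | hx
  · rw [nf_zero hΦ]; exact hΦ.nonneg y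
  have hy : 0 < y := hx.trans_le hxy
  have ht : x / y ≤ 1 := (div_le_one hy).2 hxy
  have h := hΦ.convex.2 (Set.mem_univ y) (Set.mem_univ 0) 
    (show 0 ≤ x / y by positivity) (show 0 ≤ 1 - x / y by linarith) (by ring)
  simp only [smul_eq_mul, nf_zero hΦ, mul_zero, add_zero] at h
  rw [div_mul_cancel₀ _ hy.ne'] at h
  calc Φ x ≤ x / y * Φ y := h
    _ ≤ 1 * Φ y := mul_le_mul_of_nonneg_right ht (hΦ.nonneg y)
    _ = Φ y := one_mul _

theorem nf_cont {Φ : ℝ → ℝ} (hΦ : IsNFunction Φ) : Continuous Φ :=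
  continuousOn_univ.1 (hΦ.convex.continuousOn isOpen_univ)

theorem nf_pow {Φ : ℝ → ℝ} (hΦ : IsNFunction Φ) {K : ℝ} (hK : 2 < K)
    (h : ∀ x : ℝ, 0 ≤ x → Φ (2 * x) ≤ K * Φ x) (m : ℕ) (x : ℝ) (hx : 0 ≤ x) :
    Φ (2 ^ m * x) ≤ K ^ m * Φ x := by
  induction m with
  | zero => simp
  | succ m ih =>
    calc Φ (2 ^ (m + 1) * x) = Φ (2 * (2 ^ m * x)) := by congr 1; ring
      _ ≤ K * Φ (2 ^ m * x) := h _ (by positivity)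
      _ ≤ K * (K ^ m * Φ x) := mul_le_mul_of_nonneg_left ih (by linarith)
      _ = _ := by ring

theorem nf_scale {Φ : ℝ → ℝ} (hΦ : IsNFunction Φ)
    (hΔ2 : ∃ K : ℝ, 2 < K ∧ ∀ x : ℝ, 0 ≤ x → Φ (2 * x) ≤ K * Φ x) (b : ℝ) (hb : 0 ≤ b) :
    ∃ C : ℝ, 0 ≤ C ∧ ∀ x, Φ (b * x) ≤ C * Φ x := by
  obtain ⟨K, hK, h⟩ := hΔ2
  obtain ⟨m, hm⟩ := pow_unbounded_of_one_lt b (one_lt_two (α := ℝ))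
  refine ⟨K ^ m, by positivity, fun x => ?_⟩
  rw [← nf_abs hΦ (b * x), ← nf_abs hΦ x, abs_mul, abs_of_nonneg hb]
  refine le_trans (nf_mono hΦ (by positivity) ?_) (nf_pow hΦ hK h m |x| (abs_nonneg x))
  exact mul_le_mul_of_nonneg_right hm.le (abs_nonneg x)

theorem nf_small {Φ : ℝ → ℝ} (hΦ : IsNFunction Φ) (s : ℝ) :
    ∃ M : ℝ, 0 < M ∧ M * Φ (s / M) ≤ 1 := by
  rcases eq_or_ne s 0 with rfl | hs
  · exact ⟨1, one_pos, by simp [nf_zero hΦ]⟩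
  have hs' : 0 < |s| := abs_pos.2 hs
  have h1 : ∀ᶠ y in nhdsWithin (0 : ℝ) (Set.Ioi 0), Φ y / y < 1 / |s| :=
    hΦ.tendsto_zero.eventually (gt_mem_nhds (by positivity))
  obtain ⟨y, hy, hy0⟩ := (h1.and self_mem_nhdsWithin).exists
  have hy0 : 0 < y := hy0
  refine ⟨|s| / y, by positivity, ?_⟩
  rw [← nf_abs hΦ (s / _), abs_div, abs_of_pos (show 0 < |s| / y by positivity),
    div_div_cancel₀ hs'.ne']
  rw [lt_div_iff₀ hs'] at hy
  calc |s| / y * Φ y = Φ y / y * |s| := by ring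
    _ ≤ 1 := hy.le

theorem nf_integrableOn {Φ : ℝ → ℝ} (hΦ : IsNFunction Φ) {a : ℝ → ℝ} (ha : Measurable a)
    (hint : (∫⁻ x : ℝ, ENNReal.ofReal (Φ (a x))) < ⊤) (n : ℝ) :
    IntegrableOn a (Set.Icc (-n) n) := by
  have h1 := hΦ.tendsto_atTop.eventually_ge_atTop 1
  obtain ⟨C, hC⟩ := Filter.eventually_atTop.1 (h1.and (Filter.eventually_gt_atTop 0))
  have hI : Integrable (fun x => Φ (a x)) := by
    refine ⟨((nf_cont hΦ).measurable.comp ha).aestronglyMeasurable, ?_⟩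
    rw [hasFiniteIntegral_iff_ofReal (Filter.Eventually.of_forall fun x => hΦ.nonneg _)]
    exact hint
  have hc : IntegrableOn (fun _ : ℝ => |C|) (Set.Icc (-n) n) :=
    integrableOn_const (by simp)
  refine (hc.add hI.integrableOn).mono' ha.aestronglyMeasurable
    (Filter.Eventually.of_forall fun x => ?_)
  simp only [Pi.add_apply, Real.norm_eq_abs]
  rcases le_total |a x| C with h | h
  · have := hΦ.nonneg (a x)
    have := le_abs_self C
    linarith
  · obtain ⟨h2, h3⟩ := hC _ h
    rw [one_le_div h3, nf_abs hΦ] at h2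
    have := abs_nonneg C
    linarith

theorem nf_tail {F : ℝ → ℝ≥0∞} (hF : Measurable F) (hfin : ∫⁻ x, F x ≠ ⊤) :
    ∃ n : ℕ, ∫⁻ x, (Set.Icc (-(n : ℝ)) n)ᶜ.indicator F x ≤ 1 := by
  have h : Filter.Tendsto (fun n : ℕ => ∫⁻ x, (Set.Icc (-(n : ℝ)) n)ᶜ.indicator F x)
      Filter.atTop (nhds (∫⁻ _ : ℝ, 0)) := by
    refine tendsto_lintegral_of_dominated_convergence F
      (fun n => hF.indicator measurableSet_Icc.compl)
      (fun n => Filter.Eventually.of_forall fun x => Set.indicator_le_self _ _ _) hfin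
      (Filter.Eventually.of_forall fun x => ?_)
    obtain ⟨N, hN⟩ := exists_nat_ge |x|
    refine tendsto_const_nhds.congr' ?_
    filter_upwards [Filter.eventually_ge_atTop N] with n hn
    have hn' : (N : ℝ) ≤ n := by exact_mod_cast hn
    rw [Set.indicator_of_notMem]
    simpa using abs_le.1 (hN.trans hn')
  rw [lintegral_zero] at h
  exact (h.eventually (Iic_mem_nhds one_pos)).exists

/-- If `Φ` is an N-function satisfying the `Δ₂`-condition and `a : ℝ → ℝ` is measurable with
`∫ Φ(a) < ∞`, then `a` can be approximated arbitrarily well in the Luxemburg norm by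
compactly supported integrable functions of zero mean. (Hence the first reduced
`L_{Φ₁,Φ}`-cohomology of `ℝ` vanishes.) -/
theorem reduced_orlicz_cohomology_real_line_vanishes
    {Φ : ℝ → ℝ} (hΦ : IsNFunction Φ)
    (hΔ2 : ∃ K : ℝ, 2 < K ∧ ∀ x : ℝ, 0 ≤ x → Φ (2 * x) ≤ K * Φ x)
    {a : ℝ → ℝ} (ha : Measurable a)
    (hint : (∫⁻ x : ℝ, ENNReal.ofReal (Φ (a x))) < ⊤) :
    ∀ ε : ℝ, 0 < ε → ∃ g : ℝ → ℝ, Integrable g ∧ HasCompactSupport g ∧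
      (∫ x : ℝ, g x) = 0 ∧ luxNorm volume Φ (fun x => g x - a x) < ENNReal.ofReal ε := by
  intro ε hε
  obtain ⟨C, hC0, hC⟩ := nf_scale hΦ hΔ2 (4 / ε) (by positivity)
  have hΦm := (nf_cont hΦ).measurable
  have hfin : ∫⁻ x, ENNReal.ofReal (Φ (4 / ε * a x)) ≠ ⊤ := by
    refine ne_of_lt (lt_of_le_of_lt (lintegral_mono fun x => ENNReal.ofReal_le_ofReal (hC (a x))) ?_)
    simp_rw [ENNReal.ofReal_mul hC0]
    rw [lintegral_const_mul' _ _ ENNReal.ofReal_ne_top]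
    exact ENNReal.mul_lt_top ENNReal.ofReal_lt_top hint
  have hFm : Measurable fun x => ENNReal.ofReal (Φ (4 / ε * a x)) :=
    (hΦm.comp (ha.const_mul _)).ennreal_ofReal
  obtain ⟨n, hn⟩ := nf_tail hFm hfin
  set S : Set ℝ := Set.Icc (-(n : ℝ)) n with hS
  have haS : IntegrableOn a S := nf_integrableOn hΦ ha hint n
  obtain ⟨M, hM, hM1⟩ := nf_small hΦ (4 / ε * ∫ x in S, a x)
  set c : ℝ := ∫ x in S, a x with hc
  set T : Set ℝ := Set.Ioc (n : ℝ) (n + M) with hT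
  have hTi : IntegrableOn (fun _ : ℝ => c / M) T := integrableOn_const (by simp [hT])
  have i1 : Integrable (S.indicator a) := haS.integrable_indicator measurableSet_Icc
  have i2 : Integrable (T.indicator fun _ => c / M) := hTi.integrable_indicator measurableSet_Ioc
  refine ⟨fun x => S.indicator a x - T.indicator (fun _ => c / M) x, i1.sub i2, ?_, ?_, ?_⟩
  · refine HasCompactSupport.intro (K := Set.Icc (-(n : ℝ)) (n + M)) isCompact_Icc fun x hx => ?_
    have hn0 : (0 : ℝ) ≤ n := n.cast_nonneg
    have h1 : x ∉ S := fun h => hx ⟨h.1, by linarith [h.2]⟩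
    have h2 : x ∉ T := fun h => hx ⟨by linarith [h.1], h.2⟩
    simp [h1, h2]
  · rw [integral_sub i1 i2, integral_indicator measurableSet_Icc,
      integral_indicator measurableSet_Ioc, setIntegral_const]
    simp only [hT, Measure.real, Real.volume_Ioc, add_sub_cancel_left, smul_eq_mul,
      ENNReal.toReal_ofReal hM.le]
    rw [mul_div_cancel₀ _ hM.ne', hc, sub_self]
  · refine lt_of_le_of_lt (sInf_le ⟨ε / 2, by positivity, rfl, ?_⟩)
      ((ENNReal.ofReal_lt_ofReal_iff hε).2 (half_lt_self hε))
    have key : ∀ x, ENNReal.ofReal (Φ ((S.indicator a x - T.indicator (fun _ => c / M) x - a x)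
        / (ε / 2))) ≤ ENNReal.ofReal (1 / 2) * Sᶜ.indicator
          (fun x => ENNReal.ofReal (Φ (4 / ε * a x))) x
        + ENNReal.ofReal (1 / 2) * T.indicator
          (fun _ => ENNReal.ofReal (Φ (4 / ε * c / M))) x := by
      intro x
      have e1 : Sᶜ.indicator (fun x => ENNReal.ofReal (Φ (4 / ε * a x))) x =
          ENNReal.ofReal (Φ (-(4 / ε * Sᶜ.indicator a x))) := by
        rw [hΦ.even]
        by_cases h : x ∈ Sᶜ
        · simp [Set.indicator_of_mem h]
        · simp [Set.indicator_of_notMem h, nf_zero hΦ]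
      have e2 : T.indicator (fun _ => ENNReal.ofReal (Φ (4 / ε * c / M))) x =
          ENNReal.ofReal (Φ (-(4 / ε * T.indicator (fun _ => c / M) x))) := by
        rw [hΦ.even]
        by_cases h : x ∈ T
        · simp [Set.indicator_of_mem h, mul_div_assoc]
        · simp [Set.indicator_of_notMem h, nf_zero hΦ]
      have e3 : a x = S.indicator a x + Sᶜ.indicator a x := by
        by_cases h : x ∈ S <;> simp [h]
      rw [e1, e2, ← ENNReal.ofReal_mul (by norm_num), ← ENNReal.ofReal_mul (by norm_num),
        ← ENNReal.ofReal_add (mul_nonneg (by norm_num) (hΦ.nonneg _))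
          (mul_nonneg (by norm_num) (hΦ.nonneg _))]
      refine ENNReal.ofReal_le_ofReal ?_
      have h := hΦ.convex.2 (Set.mem_univ (-(4 / ε * Sᶜ.indicator a x)))
        (Set.mem_univ (-(4 / ε * T.indicator (fun _ => c / M) x))) 
        (show (0 : ℝ) ≤ 1 / 2 by norm_num) (show (0 : ℝ) ≤ 1 / 2 by norm_num) (by norm_num)
      simp only [smul_eq_mul] at h
      refine le_trans (le_of_eq ?_) h
      congr 1
      rw [e3]
      field_simp
      ring
    refine (lintegral_mono key).trans ?_
    have hSm : Measurable (Sᶜ.indicator (fun x => ENNReal.ofReal (Φ (4 / ε * a x)))) :=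
      hFm.indicator measurableSet_Icc.compl
    rw [lintegral_add_left (hSm.const_mul _), lintegral_const_mul _ hSm,
      lintegral_const_mul _ (measurable_const.indicator measurableSet_Ioc),
      lintegral_indicator_const measurableSet_Ioc]
    have hG : ENNReal.ofReal (Φ (4 / ε * c / M)) * volume T ≤ 1 := by
      rw [hT, Real.volume_Ioc, add_sub_cancel_left, ← ENNReal.ofReal_mul (hΦ.nonneg _),
        ← ENNReal.ofReal_one]
      exact ENNReal.ofReal_le_ofReal (by linarith)
    calc _ ≤ ENNReal.ofReal (1 / 2) * 1 + ENNReal.ofReal (1 / 2) * 1 := by gcongr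
      _ = 1 := by
        rw [mul_one, ← ENNReal.ofReal_add (by norm_num) (by norm_num)]
        norm_num
end

section
/- There exist smooth functions f, g : ℝ² → ℝ, written in coordinates (y, z), with the following properties: (1) f and g are nonnegative; (2) f(y,z) = g(y,z) = 0 whenever z ≤ 0 or |y| ≥ 1; (3) the partial derivatives ∂f/∂y and ∂g/∂y are bounded on ℝ²; (4) the partial derivatives ∂f/∂z and ∂g/∂z have compact support; (5) the Jacobian J = (∂f/∂y)(∂g/∂z) − (∂f/∂z)(∂g/∂y) is nonnegative everywhere, vanishes outside the rectangle [−1,1] × [0,1], and satisfies ∫_{ℝ²} J dy dz = 1; and (6) for every N-function Φ satisfying ∫_0^1 Φ(v)/v² dv < ∞ and every a > 0, ∫_{ℝ²} Φ( a·√( e^{−2z}(∂f/∂y)² + (∂f/∂z)² ) ) · e^{z} dy dz < ∞, and the same with f replaced by g. -/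
open MeasureTheory ENNReal

/-- Partial derivative in the first (`y`) coordinate. -/
noncomputable def pdy (f : ℝ × ℝ → ℝ) (p : ℝ × ℝ) : ℝ := deriv (fun y => f (y, p.2)) p.1

/-- Partial derivative in the second (`z`) coordinate. -/
noncomputable def pdz (f : ℝ × ℝ → ℝ) (p : ℝ × ℝ) : ℝ := deriv (fun z => f (p.1, z)) p.2

namespace WedgePair

open Set Filter Topology

/-- The product function `β(y) h(z)` with `h` the standard smooth transition. -/
noncomputable def prodFn (β : ℝ → ℝ) (p : ℝ × ℝ) : ℝ := β p.1 * Real.smoothTransition p.2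

lemma pdy_prodFn (β : ℝ → ℝ) (p : ℝ × ℝ) :
    pdy (prodFn β) p = deriv β p.1 * Real.smoothTransition p.2 := by
  simp [pdy, prodFn]

lemma pdz_prodFn (β : ℝ → ℝ) (p : ℝ × ℝ) :
    pdz (prodFn β) p = β p.1 * deriv Real.smoothTransition p.2 := by
  simp [pdz, prodFn]

lemma contDiff_prodFn {β : ℝ → ℝ} (hβ : ContDiff ℝ (⊤ : ℕ∞) β) :
    ContDiff ℝ (⊤ : ℕ∞) (prodFn β) := by
  unfold prodFn
  exact (hβ.comp contDiff_fst).mul (Real.smoothTransition.contDiff.comp contDiff_snd)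

lemma deriv_h_neg {z : ℝ} (hz : z < 0) : deriv Real.smoothTransition z = 0 := by
  have : Real.smoothTransition =ᶠ[𝓝 z] fun _ => (0 : ℝ) := by
    filter_upwards [Iio_mem_nhds hz] with x hx
    exact Real.smoothTransition.zero_of_nonpos (le_of_lt hx)
  rw [this.deriv_eq]; simp

lemma deriv_h_gt {z : ℝ} (hz : 1 < z) : deriv Real.smoothTransition z = 0 := by
  have : Real.smoothTransition =ᶠ[𝓝 z] fun _ => (1 : ℝ) := by
    filter_upwards [Ioi_mem_nhds hz] with x hx
    exact Real.smoothTransition.one_of_one_le (le_of_lt hx)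
  rw [this.deriv_eq]; simp

lemma deriv_h_out {z : ℝ} (hz : z ∉ Icc (0 : ℝ) 1) : deriv Real.smoothTransition z = 0 := by
  by_cases h : z < 0
  · exact deriv_h_neg h
  · exact deriv_h_gt (by by_contra h'; exact hz ⟨by linarith, by linarith⟩)

lemma continuous_deriv_h : Continuous (deriv Real.smoothTransition) :=
  (Real.smoothTransition.contDiff (n := 1)).continuous_deriv (by simp)

lemma hcs_deriv_h : HasCompactSupport (deriv Real.smoothTransition) :=
  HasCompactSupport.intro isCompact_Icc (fun _ hx => deriv_h_out hx)

lemma deriv_beta_out {β : ℝ → ℝ} (h0 : ∀ y, 1 ≤ |y| → β y = 0) {y : ℝ}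
    (hy : y ∉ Icc (-1 : ℝ) 1) : deriv β y = 0 := by
  have hy' : 1 < |y| := by
    by_contra h
    exact hy (abs_le.1 (by linarith))
  have : β =ᶠ[𝓝 y] fun _ => (0 : ℝ) := by
    filter_upwards [continuous_abs.continuousAt.preimage_mem_nhds (Ioi_mem_nhds hy')] with x hx
    exact h0 x (le_of_lt hx)
  rw [this.deriv_eq]; simp

lemma beta_out {β : ℝ → ℝ} (h0 : ∀ y, 1 ≤ |y| → β y = 0) {y : ℝ}
    (hy : y ∉ Icc (-1 : ℝ) 1) : β y = 0 := by
  apply h0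
  by_contra h
  exact hy (abs_le.1 (by linarith))

lemma hcs_pdz {β : ℝ → ℝ} (h0 : ∀ y, 1 ≤ |y| → β y = 0) :
    HasCompactSupport (pdz (prodFn β)) := by
  refine HasCompactSupport.intro
    ((isCompact_Icc (a := (-1 : ℝ)) (b := 1)).prod (isCompact_Icc (a := (0 : ℝ)) (b := 1))) ?_
  intro p hp
  rw [pdz_prodFn]
  by_cases h1 : p.1 ∈ Icc (-1 : ℝ) 1
  · have : p.2 ∉ Icc (0 : ℝ) 1 := fun h2 => hp ⟨h1, h2⟩
    rw [deriv_h_out this, mul_zero]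
  · rw [beta_out h0 h1, zero_mul]

/-- A common bound for `β`, `β'`, `h'`. -/
lemma exists_bound {β : ℝ → ℝ} (hβ : ContDiff ℝ (⊤ : ℕ∞) β) (h0 : ∀ y, 1 ≤ |y| → β y = 0) :
    ∃ M : ℝ, 0 < M ∧ (∀ y, |β y| ≤ M) ∧ (∀ y, |deriv β y| ≤ M) ∧
      ∀ z, |deriv Real.smoothTransition z| ≤ M := by
  have c1 : HasCompactSupport β := HasCompactSupport.intro isCompact_Icc (fun _ hx => beta_out h0 hx)
  obtain ⟨A, hA⟩ := c1.exists_bound_of_continuous hβ.continuous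
  obtain ⟨B, hB⟩ := c1.deriv.exists_bound_of_continuous (hβ.continuous_deriv (by simp))
  obtain ⟨C, hC⟩ := hcs_deriv_h.exists_bound_of_continuous continuous_deriv_h
  simp only [Real.norm_eq_abs] at hA hB hC
  have a0 := (abs_nonneg _).trans (hA 0)
  have b0 := (abs_nonneg _).trans (hB 0)
  have c0 := (abs_nonneg _).trans (hC 0)
  exact ⟨A + B + C + 1, by linarith, fun y => by linarith [hA y], fun y => by linarith [hB y],
    fun y => by linarith [hC y]⟩

lemma pdy_bound {β : ℝ → ℝ} {M : ℝ} (hM : ∀ y, |deriv β y| ≤ M) (p : ℝ × ℝ) :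
    |pdy (prodFn β) p| ≤ M := by
  rw [pdy_prodFn, abs_mul, abs_of_nonneg (Real.smoothTransition.nonneg _)]
  have h1 := Real.smoothTransition.le_one p.2
  have h2 := Real.smoothTransition.nonneg p.2
  nlinarith [hM p.1, abs_nonneg (deriv β p.1)]

lemma nfun_mono {Φ : ℝ → ℝ} (hΦ : IsNFunction Φ) {x y : ℝ} (hx : 0 ≤ x) (hxy : x ≤ y) :
    Φ x ≤ Φ y := by
  rcases eq_or_lt_of_le (hx.trans hxy) with h | h
  · have : x = y := by linarith
    rw [this]
  · have hc := hΦ.convex.2 (mem_univ 0) (mem_univ y)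
      (show 0 ≤ 1 - x / y by rw [sub_nonneg, div_le_one h]; exact hxy)
      (show 0 ≤ x / y by positivity) (by ring)
    have e : x / y * y = x := by field_simp
    have hz : Φ 0 = 0 := (hΦ.zero_iff 0).2 rfl
    simp only [smul_eq_mul, mul_zero, zero_add, hz, e] at hc
    have h1 : x / y ≤ 1 := by rw [div_le_one h]; exact hxy
    nlinarith [hΦ.nonneg y]

lemma nfun_cont {Φ : ℝ → ℝ} (hΦ : IsNFunction Φ) : Continuous Φ :=
  continuousOn_univ.1 (hΦ.convex.continuousOn isOpen_univ)

lemma tail_finite {Φ : ℝ → ℝ}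
    (hA : (∫⁻ v in Set.Ioo (0 : ℝ) 1, ENNReal.ofReal (Φ v / v ^ 2)) < ⊤)
    {A Z : ℝ} (hA0 : 0 < A) (hZ : Real.log A ≤ Z) :
    (∫⁻ z in Ioi Z, ENNReal.ofReal (Φ (A * Real.exp (-z)) * Real.exp z)) < ⊤ := by
  have key := lintegral_image_eq_lintegral_abs_deriv_mul (s := Ioi Z)
    (f := fun z => A * Real.exp (-z)) (f' := fun z => A * -Real.exp (-z)) measurableSet_Ioi
    (fun x _ => by
      have := ((hasDerivAt_neg x).exp.const_mul A).hasDerivWithinAt (s := Ioi Z)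
      simpa using this)
    (fun x _ y _ h => by
      have h' := mul_left_cancel₀ hA0.ne' h
      have := Real.exp_injective h'
      linarith)
    (fun v => ENNReal.ofReal (Φ v / v ^ 2))
  have sub : (fun z => A * Real.exp (-z)) '' Ioi Z ⊆ Ioo (0 : ℝ) 1 := by
    rintro _ ⟨z, hz, rfl⟩
    refine ⟨by positivity, ?_⟩
    have : Real.log A < z := lt_of_le_of_lt hZ hz
    have h2 : A < Real.exp z := (Real.log_lt_iff_lt_exp hA0).1 this
    have h3 : Real.exp (-z) * Real.exp z = 1 := by rw [← Real.exp_add]; simp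
    have h4 := Real.exp_pos (-z)
    show A * Real.exp (-z) < 1
    nlinarith
  have fin : (∫⁻ z in Ioi Z, ENNReal.ofReal |A * -Real.exp (-z)| *
      ENNReal.ofReal (Φ (A * Real.exp (-z)) / (A * Real.exp (-z)) ^ 2)) < ⊤ := by
    rw [← key]
    exact lt_of_le_of_lt (lintegral_mono_set sub) hA
  have eq : ∀ z, ENNReal.ofReal (Φ (A * Real.exp (-z)) * Real.exp z) =
      ENNReal.ofReal A * (ENNReal.ofReal |A * -Real.exp (-z)| *
      ENNReal.ofReal (Φ (A * Real.exp (-z)) / (A * Real.exp (-z)) ^ 2)) := by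
    intro z
    rw [← ENNReal.ofReal_mul (abs_nonneg _), ← ENNReal.ofReal_mul hA0.le]
    congr 1
    have h4 := Real.exp_pos (-z)
    rw [mul_neg, abs_neg, abs_of_pos (by positivity)]
    have : Real.exp z = (Real.exp (-z))⁻¹ := by rw [← Real.exp_neg]; simp
    rw [this]
    field_simp
  simp_rw [eq]
  rw [lintegral_const_mul' _ _ ENNReal.ofReal_ne_top]
  exact ENNReal.mul_lt_top ENNReal.ofReal_lt_top fin

lemma orlicz_finite {β : ℝ → ℝ} (hβ : ContDiff ℝ (⊤ : ℕ∞) β) (h0 : ∀ y, 1 ≤ |y| → β y = 0)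
    {Φ : ℝ → ℝ} (hΦ : IsNFunction Φ)
    (hA : (∫⁻ v in Set.Ioo (0 : ℝ) 1, ENNReal.ofReal (Φ v / v ^ 2)) < ⊤)
    {a : ℝ} (ha : 0 < a) :
    (∫⁻ p : ℝ × ℝ, ENNReal.ofReal
      (Φ (a * Real.sqrt (Real.exp (-2 * p.2) * (pdy (prodFn β) p) ^ 2 + (pdz (prodFn β) p) ^ 2)) *
        Real.exp p.2)) < ⊤ := by
  obtain ⟨M, hM, hb, hb', hh⟩ := exists_bound hβ h0
  have hz : Φ 0 = 0 := (hΦ.zero_iff 0).2 rfl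
  have hΦc := nfun_cont hΦ
  set A := a * M with hAdef
  have hA0 : 0 < A := by positivity
  set Z := max 1 (Real.log A) with hZdef
  set K : ℝ≥0∞ := ENNReal.ofReal (Φ (a * Real.sqrt (M ^ 2 + (M * M) ^ 2)) * Real.exp Z) with hK
  set F1 : ℝ → ℝ≥0∞ := (Icc (-1 : ℝ) 1).indicator (fun _ => 1) with hF1
  set T : ℝ → ℝ≥0∞ := fun z => ENNReal.ofReal (Φ (A * Real.exp (-z)) * Real.exp z) with hT
  have hTm : Measurable T := by
    apply ENNReal.measurable_ofReal.comp
    have : Continuous fun z => Φ (A * Real.exp (-z)) * Real.exp z := by fun_prop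
    exact this.measurable
  set F2 : ℝ → ℝ≥0∞ := fun z => (Icc (0 : ℝ) Z).indicator (fun _ => K) z + (Ioi Z).indicator T z
    with hF2
  have m1 : Measurable F1 := measurable_const.indicator measurableSet_Icc
  have m2 : Measurable F2 :=
    (measurable_const.indicator measurableSet_Icc).add (hTm.indicator measurableSet_Ioi)
  have i1 : ∫⁻ y, F1 y < ⊤ := by
    rw [hF1, lintegral_indicator measurableSet_Icc]; simp
  have i2 : ∫⁻ z, F2 z < ⊤ := by
    rw [hF2, lintegral_add_left (measurable_const.indicator measurableSet_Icc),
      lintegral_indicator measurableSet_Icc, lintegral_indicator measurableSet_Ioi]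
    refine ENNReal.add_lt_top.2 ⟨?_, tail_finite hA hA0 (le_max_right _ _)⟩
    simp only [lintegral_const, Measure.restrict_apply, MeasurableSet.univ, univ_inter,
      Real.volume_Icc]
    exact ENNReal.mul_lt_top ENNReal.ofReal_lt_top ENNReal.ofReal_lt_top
  have bound : ∀ p : ℝ × ℝ, ENNReal.ofReal
      (Φ (a * Real.sqrt (Real.exp (-2 * p.2) * (pdy (prodFn β) p) ^ 2 + (pdz (prodFn β) p) ^ 2)) *
        Real.exp p.2) ≤ F1 p.1 * F2 p.2 := by
    rintro ⟨y, z⟩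
    rw [pdy_prodFn, pdz_prodFn]
    dsimp only
    by_cases hy : y ∈ Icc (-1 : ℝ) 1
    swap
    · rw [deriv_beta_out h0 hy, beta_out h0 hy]; simp [hz]
    have e1 : F1 y = 1 := by simp [hF1, hy]
    rw [e1, one_mul]
    rcases lt_or_ge z 0 with hz0 | hz0
    · rw [deriv_h_neg hz0, Real.smoothTransition.zero_of_nonpos hz0.le]; simp [hz]
    rcases le_or_gt z Z with hzZ | hzZ
    · have e2 : K ≤ F2 z := by
        have : (Icc (0 : ℝ) Z).indicator (fun _ => K) z = K := by
          rw [indicator_of_mem]; exact ⟨hz0, hzZ⟩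
        calc K = (Icc (0 : ℝ) Z).indicator (fun _ => K) z := this.symm
          _ ≤ F2 z := le_self_add
      refine le_trans (ENNReal.ofReal_le_ofReal ?_) e2
      have q1 : Real.exp (-2 * z) ≤ 1 := Real.exp_le_one_iff.2 (by linarith)
      have q2 : (deriv β y * Real.smoothTransition z) ^ 2 ≤ M ^ 2 := by
        have := pdy_bound hb' (y, z)
        rw [pdy_prodFn] at this
        exact sq_le_sq' (abs_le.1 this).1 (abs_le.1 this).2
      have q3 : Real.exp (-2 * z) * (deriv β y * Real.smoothTransition z) ^ 2 ≤ M ^ 2 := by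
        nlinarith [sq_nonneg (deriv β y * Real.smoothTransition z), Real.exp_pos (-2 * z)]
      have q4 : (β y * deriv Real.smoothTransition z) ^ 2 ≤ (M * M) ^ 2 := by
        rw [sq_le_sq, abs_mul, abs_of_pos (mul_pos hM hM)]
        exact mul_le_mul (hb y) (hh z) (abs_nonneg _) hM.le
      refine mul_le_mul ?_ (Real.exp_le_exp.2 hzZ) (Real.exp_pos z).le (hΦ.nonneg _)
      apply nfun_mono hΦ (by positivity)
      refine mul_le_mul_of_nonneg_left (Real.sqrt_le_sqrt ?_) ha.le
      linarith
    · have hz1 : 1 < z := lt_of_le_of_lt (le_max_left _ _) hzZ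
      have e2 : T z ≤ F2 z := by
        have : (Ioi Z).indicator T z = T z := by
          rw [indicator_of_mem]; exact hzZ
        calc T z = (Ioi Z).indicator T z := this.symm
          _ ≤ F2 z := le_add_self
      refine le_trans (ENNReal.ofReal_le_ofReal ?_) e2
      rw [deriv_h_gt hz1, Real.smoothTransition.one_of_one_le hz1.le]
      refine mul_le_mul_of_nonneg_right ?_ (Real.exp_pos z).le
      apply nfun_mono hΦ (by positivity)
      have : Real.exp (-2 * z) * (deriv β y * 1) ^ 2 + (β y * 0) ^ 2 =
          (Real.exp (-z) * |deriv β y|) ^ 2 := by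
        rw [mul_pow (Real.exp (-z)), sq_abs, ← Real.exp_nat_mul]
        push_cast
        ring_nf
      rw [this, Real.sqrt_sq (by positivity), hAdef]
      have := mul_le_mul_of_nonneg_left (hb' y) (Real.exp_pos (-z)).le
      nlinarith
  refine lt_of_le_of_lt (lintegral_mono bound) ?_
  rw [Measure.volume_eq_prod, lintegral_prod_mul m1.aemeasurable m2.aemeasurable]
  exact ENNReal.mul_lt_top i1 i2

/-- The bump in `y`. -/
noncomputable def bmp (y : ℝ) : ℝ := Real.smoothTransition (1 - y ^ 2)

lemma bmp_contDiff : ContDiff ℝ (⊤ : ℕ∞) bmp := by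
  unfold bmp
  exact Real.smoothTransition.contDiff.comp (by fun_prop)

lemma bmp_zero (y : ℝ) (hy : 1 ≤ |y|) : bmp y = 0 := by
  apply Real.smoothTransition.zero_of_nonpos
  rw [← sq_abs]; nlinarith

lemma bmp_nonneg (y : ℝ) : 0 ≤ bmp y := Real.smoothTransition.nonneg _

lemma int_bmp : 0 < ∫ y, bmp y ^ 2 := by
  refine Continuous.integral_pos_of_hasCompactSupport_nonneg_nonzero (x := 0)
    (bmp_contDiff.continuous.pow 2) ?_ (fun y => sq_nonneg _) (by simp [bmp])
  refine HasCompactSupport.intro (isCompact_Icc (a := (-1 : ℝ)) (b := 1)) fun y hy => ?_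
  rw [beta_out bmp_zero hy]; simp

lemma int_h : (∫ z, Real.smoothTransition z * deriv Real.smoothTransition z) = 1 / 2 := by
  have := integral_of_hasDerivAt_of_tendsto (f := fun z => Real.smoothTransition z ^ 2 / 2)
    (f' := fun z => Real.smoothTransition z * deriv Real.smoothTransition z) (m := 0) (n := 1 / 2)
    (fun x => by
      have hd : HasDerivAt Real.smoothTransition (deriv Real.smoothTransition x) x :=
        ((Real.smoothTransition.contDiff (n := 1)).differentiable (by simp) x).hasDerivAt
      have := (hd.pow 2).div_const 2
      exact this.congr_deriv (by push_cast; ring))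
    ((Real.smoothTransition.continuous.mul continuous_deriv_h).integrable_of_hasCompactSupport
      hcs_deriv_h.mul_left)
    (by
      refine tendsto_const_nhds.congr' ?_
      filter_upwards [eventually_le_atBot 0] with z hz
      simp [Real.smoothTransition.zero_of_nonpos hz])
    (by
      refine tendsto_const_nhds.congr' ?_
      filter_upwards [eventually_ge_atTop 1] with z hz
      simp [Real.smoothTransition.one_of_one_le hz])
  rw [this]; ring

/-- The second profile. -/
noncomputable def bmp2 (C : ℝ) (y : ℝ) : ℝ := C * ((y + 2) * bmp y)

lemma bmp2_contDiff (C : ℝ) : ContDiff ℝ (⊤ : ℕ∞) (bmp2 C) := by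
  unfold bmp2
  exact contDiff_const.mul ((contDiff_id.add contDiff_const).mul bmp_contDiff)

lemma bmp2_zero (C y : ℝ) (hy : 1 ≤ |y|) : bmp2 C y = 0 := by
  simp [bmp2, bmp_zero y hy]

lemma bmp2_nonneg {C : ℝ} (hC : 0 ≤ C) (y : ℝ) : 0 ≤ bmp2 C y := by
  by_cases h : 1 ≤ |y|
  · rw [bmp2_zero C y h]
  · have : -1 < y := (abs_lt.1 (not_le.1 h)).1
    exact mul_nonneg hC (mul_nonneg (by linarith) (bmp_nonneg y))

lemma bmp2_deriv (C y : ℝ) : deriv (bmp2 C) y = C * (bmp y + (y + 2) * deriv bmp y) := by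
  have hd : HasDerivAt bmp (deriv bmp y) y :=
    (bmp_contDiff.differentiable (by simp) y).hasDerivAt
  have := ((((hasDerivAt_id y).add_const 2).mul hd).const_mul C).deriv
  simp only [id, one_mul] at this
  exact this

lemma jac (C : ℝ) (p : ℝ × ℝ) :
    pdy (prodFn (bmp2 C)) p * pdz (prodFn bmp) p - pdz (prodFn (bmp2 C)) p * pdy (prodFn bmp) p =
      (C * bmp p.1 ^ 2) * (Real.smoothTransition p.2 * deriv Real.smoothTransition p.2) := by
  simp only [pdy_prodFn, pdz_prodFn, bmp2_deriv]
  unfold bmp2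
  ring

end WedgePair

/-- There exist smooth nonnegative functions `f, g` on the hyperbolic plane (modeled as `ℝ²`
with coordinates `(y, z)` and metric `ds² = e^{2z}dy² + dz²`) vanishing for `z ≤ 0` or
`|y| ≥ 1`, with bounded `y`-derivatives, compactly supported `z`-derivatives, with
`df ∧ dg = J dy ∧ dz` nonnegative, supported in `[-1,1] × [0,1]`, of total integral `1`,
and such that `df, dg ∈ L^Φ(ℍ²)` for every N-function `Φ` satisfying condition (A). -/
theorem exists_wedge_pair_hyperbolic_plane :
    ∃ f g : ℝ × ℝ → ℝ, ContDiff ℝ (⊤ : ℕ∞) f ∧ ContDiff ℝ (⊤ : ℕ∞) g ∧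
      (∀ p : ℝ × ℝ, 0 ≤ f p ∧ 0 ≤ g p) ∧
      (∀ y z : ℝ, z ≤ 0 ∨ 1 ≤ |y| → f (y, z) = 0 ∧ g (y, z) = 0) ∧
      (∃ M : ℝ, ∀ p : ℝ × ℝ, |pdy f p| ≤ M ∧ |pdy g p| ≤ M) ∧
      HasCompactSupport (pdz f) ∧ HasCompactSupport (pdz g) ∧
      (∀ p : ℝ × ℝ, 0 ≤ pdy f p * pdz g p - pdz f p * pdy g p) ∧
      (∀ p : ℝ × ℝ, p ∉ Set.Icc (-1 : ℝ) 1 ×ˢ Set.Icc (0 : ℝ) 1 →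
        pdy f p * pdz g p - pdz f p * pdy g p = 0) ∧
      (∫ p : ℝ × ℝ, (pdy f p * pdz g p - pdz f p * pdy g p)) = 1 ∧
      (∀ Φ : ℝ → ℝ, IsNFunction Φ →
        (∫⁻ v in Set.Ioo (0 : ℝ) 1, ENNReal.ofReal (Φ v / v ^ 2)) < ⊤ →
        ∀ a : ℝ, 0 < a →
          (∫⁻ p : ℝ × ℝ, ENNReal.ofReal
              (Φ (a * Real.sqrt (Real.exp (-2 * p.2) * (pdy f p) ^ 2 + (pdz f p) ^ 2)) *
                Real.exp p.2)) < ⊤ ∧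
          (∫⁻ p : ℝ × ℝ, ENNReal.ofReal
              (Φ (a * Real.sqrt (Real.exp (-2 * p.2) * (pdy g p) ^ 2 + (pdz g p) ^ 2)) *
                Real.exp p.2)) < ⊤) := by
  have hI := WedgePair.int_bmp
  set I := ∫ y, WedgePair.bmp y ^ 2 with hIdef
  have hC : 0 < 2 / I := by positivity
  obtain ⟨M1, -, -, hM1, -⟩ :=
    WedgePair.exists_bound (WedgePair.bmp2_contDiff (2 / I)) (WedgePair.bmp2_zero (2 / I))
  obtain ⟨M2, -, -, hM2, -⟩ :=
    WedgePair.exists_bound WedgePair.bmp_contDiff WedgePair.bmp_zero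
  refine ⟨WedgePair.prodFn (WedgePair.bmp2 (2 / I)), WedgePair.prodFn WedgePair.bmp,
    WedgePair.contDiff_prodFn (WedgePair.bmp2_contDiff _),
    WedgePair.contDiff_prodFn WedgePair.bmp_contDiff, ?_, ?_, ?_,
    WedgePair.hcs_pdz (WedgePair.bmp2_zero _), WedgePair.hcs_pdz WedgePair.bmp_zero, ?_, ?_, ?_, ?_⟩
  · intro p
    exact ⟨mul_nonneg (WedgePair.bmp2_nonneg hC.le _) (Real.smoothTransition.nonneg _),
      mul_nonneg (WedgePair.bmp_nonneg _) (Real.smoothTransition.nonneg _)⟩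
  · rintro y z (h | h)
    · simp [WedgePair.prodFn, Real.smoothTransition.zero_of_nonpos h]
    · simp [WedgePair.prodFn, WedgePair.bmp_zero y h, WedgePair.bmp2_zero _ y h]
  · exact ⟨max M1 M2, fun p => ⟨(WedgePair.pdy_bound hM1 p).trans (le_max_left _ _),
      (WedgePair.pdy_bound hM2 p).trans (le_max_right _ _)⟩⟩
  · intro p
    rw [WedgePair.jac]
    exact mul_nonneg (mul_nonneg hC.le (sq_nonneg _))
      (mul_nonneg (Real.smoothTransition.nonneg _) Real.smoothTransition.monotone.deriv_nonneg)
  · intro p hp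
    rw [WedgePair.jac]
    by_cases h1 : p.1 ∈ Set.Icc (-1 : ℝ) 1
    · have : p.2 ∉ Set.Icc (0 : ℝ) 1 := fun h2 => hp ⟨h1, h2⟩
      rw [WedgePair.deriv_h_out this]; simp
    · rw [WedgePair.beta_out WedgePair.bmp_zero h1]; simp
  · simp_rw [WedgePair.jac]
    rw [Measure.volume_eq_prod, integral_prod_mul (fun y => 2 / I * WedgePair.bmp y ^ 2)
      (fun z => Real.smoothTransition z * deriv Real.smoothTransition z), WedgePair.int_h,
      integral_const_mul, ← hIdef]
    field_simp
  · intro Φ hΦ hA a ha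
    exact ⟨WedgePair.orlicz_finite (WedgePair.bmp2_contDiff _) (WedgePair.bmp2_zero _) hΦ hA ha,
      WedgePair.orlicz_finite WedgePair.bmp_contDiff WedgePair.bmp_zero hΦ hA ha⟩
end

section
/- Let n ≥ 2, let U ⊂ ℝⁿ be a bounded measurable set of diameter d > 0, and let Φ be an N-function. For a measurable function f : U → ℝ define (Sf)(x) = ∫_U |f(y)| · |y − x|^{1−n} dy for x ∈ U. Then with C = ∫_{{z ∈ ℝⁿ : |z| ≤ d}} |z|^{1−n} dz (which is finite), one has ‖Sf‖_{(Φ),U} ≤ C · ‖f‖_{(Φ),U} for every measurable f : U → ℝ, where ‖·‖_{(Φ),U} denotes the Luxemburg norm on U with Lebesgue measure. (Consequently, the Iwaniec–Lutoborski averaged homotopy operator T, which satisfies |Tθ(x)| ≤ C'∫_U |θ(y)|·|y−x|^{1−n} dy on a bounded convex domain U, maps L^Φ(U, Λ^k) continuously into L^Φ(U, Λ^{k−1}), and hence H^k_Φ(𝔹ⁿ) = 0 for k = 1, …, n.) -/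
open MeasureTheory ENNReal

lemma rieszAux_integrable {n : ℕ} (hn : 2 ≤ n) (d : ℝ) :
    IntegrableOn (fun z : EuclideanSpace ℝ (Fin n) => ‖z‖ ^ (1 - (n : ℝ)))
      (Metric.closedBall 0 d) := by
  have hm : AEStronglyMeasurable (fun z : EuclideanSpace ℝ (Fin n) => ‖z‖ ^ (1 - (n : ℝ)))
      volume := by
    apply Measurable.aestronglyMeasurable
    fun_prop
  have h := integrableOn_ball_of_norm_le_rpow (E := EuclideanSpace ℝ (Fin n)) (μ := volume)
    (f := fun z : EuclideanSpace ℝ (Fin n) => ‖z‖ ^ (1 - (n : ℝ))) (C := 1)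
    (α := (n : ℝ) - 1) (r := d + 1) (by simp; omega) (by simp)
    (Filter.Eventually.of_forall fun x => by
      rw [Real.norm_of_nonneg (by positivity), one_mul, neg_sub]) hm
  exact h.mono_set (Metric.closedBall_subset_ball (by linarith))

lemma rieszAux_pos {n : ℕ} (hn : 2 ≤ n) {d : ℝ} (hd : 0 < d) :
    0 < ∫ z in Metric.closedBall (0 : EuclideanSpace ℝ (Fin n)) d, ‖z‖ ^ (1 - (n : ℝ)) := by
  have : Nontrivial (EuclideanSpace ℝ (Fin n)) := by
    apply Module.nontrivial_of_finrank_pos (R := ℝ)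
    simp; omega
  rw [setIntegral_pos_iff_support_of_nonneg_ae
    (Filter.Eventually.of_forall fun x => by simp only [Pi.zero_apply]; positivity)
    (rieszAux_integrable hn d)]
  have h1 : volume (Metric.ball (0 : EuclideanSpace ℝ (Fin n)) d \ {0})
      = volume (Metric.ball (0 : EuclideanSpace ℝ (Fin n)) d) :=
    measure_sdiff_null (measure_singleton _)
  refine lt_of_lt_of_le ?_ (measure_mono
    (s := Metric.ball (0 : EuclideanSpace ℝ (Fin n)) d \ {0}) ?_)
  · rw [h1]; exact Metric.measure_ball_pos _ _ hd
  · intro z hz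
    refine ⟨?_, Metric.ball_subset_closedBall hz.1⟩
    have : 0 < ‖z‖ := norm_pos_iff.2 hz.2
    exact ne_of_gt (Real.rpow_pos_of_pos this _)

/-- The Jensen inequality in `lintegral` form, with no integrability hypothesis. -/
lemma rieszAux_jensen {α : Type*} [MeasurableSpace α] (ν : Measure α) [IsProbabilityMeasure ν]
    {Φ : ℝ → ℝ} (hΦ : IsNFunction Φ) {g : α → ℝ} (hg : Measurable g) :
    ENNReal.ofReal (Φ (∫ x, g x ∂ν)) ≤ ∫⁻ x, ENNReal.ofReal (Φ (g x)) ∂ν := by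
  have hc : Continuous Φ := by
    rw [← continuousOn_univ]
    exact hΦ.convex.continuousOn isOpen_univ
  by_cases h1 : Integrable g ν
  · by_cases h2 : Integrable (Φ ∘ g) ν
    · have := hΦ.convex.map_integral_le hc.continuousOn isClosed_univ (by simp) h1 h2
      refine (ENNReal.ofReal_le_ofReal this).trans ?_
      exact (ofReal_integral_eq_lintegral_ofReal h2
        (Filter.Eventually.of_forall fun x => hΦ.nonneg _)).le
    · have : ∫⁻ x, ENNReal.ofReal (Φ (g x)) ∂ν = ⊤ := by
        by_contra h
        apply h2
        refine ⟨(hc.measurable.comp hg).aestronglyMeasurable, ?_⟩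
        exact (hasFiniteIntegral_iff_ofReal (f := Φ ∘ g)
          (Filter.Eventually.of_forall fun x => hΦ.nonneg _)).2 (lt_top_iff_ne_top.2 h)
      rw [this]; exact le_top
  · rw [integral_undef h1, (hΦ.zero_iff 0).2 rfl]
    simp

/-- Boundedness on `L^Φ(U)` of the Riesz-type potential `(Sf)(x) = ∫_U |f(y)|·|y-x|^{1-n} dy`
on a bounded measurable `U ⊂ ℝⁿ` of diameter `d`: with `C = ∫_{|z| ≤ d} |z|^{1-n} dz`
(a finite constant), one has `‖Sf‖_{(Φ),U} ≤ C ‖f‖_{(Φ),U}` for every measurable `f`. -/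
theorem riesz_potential_orlicz_bound
    {n : ℕ} (hn : 2 ≤ n) {Φ : ℝ → ℝ} (hΦ : IsNFunction Φ)
    {U : Set (EuclideanSpace ℝ (Fin n))} (hU : MeasurableSet U)
    (hUb : Bornology.IsBounded U) {d : ℝ} (hd : 0 < d) (hdiam : Metric.diam U = d) :
    IntegrableOn (fun z : EuclideanSpace ℝ (Fin n) => ‖z‖ ^ (1 - (n : ℝ)))
      (Metric.closedBall 0 d) ∧
    ∀ f : EuclideanSpace ℝ (Fin n) → ℝ, Measurable f →
      luxNorm (volume.restrict U) Φ
          (fun x => ∫ y in U, |f y| * ‖y - x‖ ^ (1 - (n : ℝ))) ≤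
        ENNReal.ofReal
            (∫ z in Metric.closedBall (0 : EuclideanSpace ℝ (Fin n)) d, ‖z‖ ^ (1 - (n : ℝ))) *
          luxNorm (volume.restrict U) Φ f := by
  have hI := rieszAux_integrable hn d
  have hC := rieszAux_pos hn hd
  refine ⟨hI, fun f hf => ?_⟩
  set C := ∫ z in Metric.closedBall (0 : EuclideanSpace ℝ (Fin n)) d, ‖z‖ ^ (1 - (n : ℝ)) with hCdef
  have hC0 : ENNReal.ofReal C ≠ 0 := by simpa using hC
  rw [← ENNReal.div_le_iff' hC0 ENNReal.ofReal_ne_top]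
  refine le_sInf ?_
  rintro K ⟨k, hk, rfl, hle⟩
  rw [ENNReal.div_le_iff' hC0 ENNReal.ofReal_ne_top, ← ENNReal.ofReal_mul hC.le]
  refine sInf_le ⟨C * k, by positivity, rfl, ?_⟩
  have hc : Continuous Φ := by
    rw [← continuousOn_univ]
    exact hΦ.convex.continuousOn isOpen_univ
  have hΦ0 : Φ 0 = 0 := (hΦ.zero_iff 0).2 rfl
  -- the probability measure with density proportional to the kernel
  set w : EuclideanSpace ℝ (Fin n) → ℝ≥0∞ := fun z => ENNReal.ofReal (‖z‖ ^ (1 - (n : ℝ)) / C)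
    with hw
  have hwm : Measurable w := by rw [hw]; fun_prop
  set ν : Measure (EuclideanSpace ℝ (Fin n)) :=
    (volume.restrict (Metric.closedBall 0 d)).withDensity w with hν
  have hprob : IsProbabilityMeasure ν := by
    constructor
    rw [hν, withDensity_apply _ MeasurableSet.univ, Measure.restrict_univ, hw,
      ← ofReal_integral_eq_lintegral_ofReal (hI.div_const C)
        (Filter.Eventually.of_forall fun x => by simp only [Pi.zero_apply]; positivity),
      integral_div, ← hCdef, div_self hC.ne', ENNReal.ofReal_one]
  set g : EuclideanSpace ℝ (Fin n) → ℝ := U.indicator (fun y => |f y| / k) with hg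
  have hgm : Measurable g := by
    rw [hg]; exact Measurable.indicator (by fun_prop) hU
  have hgint : ∫⁻ y, ENNReal.ofReal (Φ (g y)) ≤ 1 := by
    refine le_trans (le_of_eq ?_) hle
    rw [← lintegral_indicator hU]
    refine lintegral_congr fun y => ?_
    by_cases hy : y ∈ U
    · simp only [hg, Set.indicator_of_mem hy]
      congr 1
      rcases abs_cases (f y) with h | h
      · rw [h.1]
      · rw [h.1, neg_div, hΦ.even]
    · simp [hg, Set.indicator_of_notMem hy, hΦ0]
  have hSf : ∀ x ∈ U, (∫ y in U, |f y| * ‖y - x‖ ^ (1 - (n : ℝ))) / (C * k)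
      = ∫ z, g (z + x) ∂ν := by
    intro x hx
    rw [hν, integral_withDensity_eq_integral_toReal_smul hwm
      (Filter.Eventually.of_forall fun z => ENNReal.ofReal_lt_top),
      ← integral_indicator Metric.isClosed_closedBall.measurableSet,
      ← integral_indicator hU, ← integral_div,
      ← integral_add_right_eq_self _ x]
    refine integral_congr_ae (Filter.Eventually.of_forall fun z => ?_)
    simp only
    by_cases hz : z + x ∈ U
    · have hzb : z ∈ Metric.closedBall (0 : EuclideanSpace ℝ (Fin n)) d := by
        have := Metric.dist_le_diam_of_mem hUb hz hx
        rw [dist_eq_norm, add_sub_cancel_right, hdiam] at this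
        simpa using this
      rw [Set.indicator_of_mem hz, Set.indicator_of_mem hzb, hg, Set.indicator_of_mem hz, hw]
      simp only [add_sub_cancel_right, smul_eq_mul]
      rw [ENNReal.toReal_ofReal (by positivity)]
      field_simp
    · rw [Set.indicator_of_notMem hz]
      by_cases hzb : z ∈ Metric.closedBall (0 : EuclideanSpace ℝ (Fin n)) d
      · rw [Set.indicator_of_mem hzb, hg, Set.indicator_of_notMem hz]; simp
      · rw [Set.indicator_of_notMem hzb]; simp
  calc ∫⁻ x in U, ENNReal.ofReal (Φ ((∫ y in U, |f y| * ‖y - x‖ ^ (1 - (n : ℝ))) / (C * k)))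
      ≤ ∫⁻ x in U, ∫⁻ z, ENNReal.ofReal (Φ (g (z + x))) ∂ν := by
        refine setLIntegral_mono' hU fun x hx => ?_
        rw [hSf x hx]
        exact rieszAux_jensen ν hΦ (hgm.comp (measurable_add_const x))
    _ ≤ ∫⁻ x, ∫⁻ z, ENNReal.ofReal (Φ (g (z + x))) ∂ν := setLIntegral_le_lintegral _ _
    _ = ∫⁻ z, (∫⁻ x, ENNReal.ofReal (Φ (g (z + x)))) ∂ν := by
        apply lintegral_lintegral_swap
        apply Measurable.aemeasurable
        exact (hc.measurable.comp (hgm.comp (measurable_snd.add measurable_fst))).ennreal_ofReal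
    _ ≤ ∫⁻ z, 1 ∂ν := by
        refine lintegral_mono fun z => ?_
        rw [lintegral_add_left_eq_self (fun x => ENNReal.ofReal (Φ (g x))) z]
        exact hgint
    _ = 1 := by simp
end
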